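/- arXiv:1911.13095 — 2 statements merged into one kernel-verified Lean document; each statement's English description precedes it below -/
import Mathlib

section
/- For every positive integer d there exists a constant α_d > 0 such that for all a ∈ [0, 2C_ζ] and all y ∈ ℝ^d, ∫_{ℝ^d} max(a, |y − z|) ζ(z) dz − ∫_{ℝ^d} |z| ζ(z) dz ≥ α_d·min(a^{d+1}, a) + α_d·min(|y|^{d+1}, |y|), where C_ζ := ∫_{ℝ^d} |z| ζ(z) dz = √2 · Γ(d/2 + 1/2)/Γ(d/2). -/
open MeasureTheory Filter Set Real Topology
open scoped NNReal ENNReal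

noncomputable section

/-- Euclidean space `ℝ^d`. -/
abbrev EucSp (d : ℕ) := EuclideanSpace ℝ (Fin d)

/-- Standard Gaussian density `ζ(z) = (2π)^{−d/2} e^{−|z|²/2}` on `ℝ^d`. -/
def gauss (d : ℕ) (z : EucSp d) : ℝ := (2 * π) ^ (-(d:ℝ)/2) * Real.exp (-‖z‖^2/2)

/-- `C_ζ := ∫_{ℝ^d} |z| ζ(z) dz`. -/
def Cz (d : ℕ) : ℝ := ∫ z : EucSp d, ‖z‖ * gauss d z

lemma Cz_aux (d : ℕ) (hd : 0 < d) :
    Cz d = Real.sqrt 2 * (Real.Gamma ((d:ℝ)/2 + 1/2) / Real.Gamma ((d:ℝ)/2)) := by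
  have : Nonempty (Fin d) := ⟨⟨0, hd⟩⟩
  have hd0 : (0:ℝ) < d := by exact_mod_cast hd
  have h1 := integral_fun_norm_addHaar (volume : Measure (EucSp d))
    (fun r : ℝ => r * ((2 * π) ^ (-(d:ℝ)/2) * Real.exp (-r^2/2)))
  have h2 : Cz d = ∫ x : EucSp d, ‖x‖ * ((2 * π) ^ (-(d:ℝ)/2) * Real.exp (-‖x‖^2/2)) := rfl
  have h3 : ∫ y in Ioi (0:ℝ), y ^ (d - 1) • (y * ((2 * π) ^ (-(d:ℝ)/2) * Real.exp (-y^2/2)))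
      = (2 * π) ^ (-(d:ℝ)/2) * ∫ y in Ioi (0:ℝ), y ^ (d:ℝ) * Real.exp (-(1/2) * y ^ (2:ℝ)) := by
    rw [← integral_const_mul]
    refine setIntegral_congr_fun measurableSet_Ioi (fun y hy => ?_)
    obtain ⟨k, rfl⟩ : ∃ k, d = k + 1 := ⟨d - 1, by omega⟩
    simp only [smul_eq_mul, Real.rpow_natCast, Real.rpow_two, Nat.add_sub_cancel]
    rw [show -y^2/2 = -(1/2) * y^2 by ring]
    ring
  rw [h2, h1, finrank_euclideanSpace, Fintype.card_fin, h3,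
    integral_rpow_mul_exp_neg_mul_rpow (by norm_num) (by linarith) (by norm_num),
    measureReal_def, EuclideanSpace.volume_ball]
  have hG1 : 0 < Real.Gamma ((d:ℝ)/2) := Real.Gamma_pos_of_pos (by positivity)
  have e1 : Real.Gamma ((d:ℝ)/2 + 1) = d/2 * Real.Gamma ((d:ℝ)/2) :=
    Real.Gamma_add_one (by positivity)
  have hq : √π ^ d = π ^ ((d:ℝ)/2) := by
    rw [Real.sqrt_eq_rpow, ← Real.rpow_natCast, ← Real.rpow_mul pi_pos.le]
    congr 1; ring
  have e2 : (2 * π) ^ (-(d:ℝ)/2) = (2:ℝ) ^ (-((d:ℝ)/2)) * π ^ (-((d:ℝ)/2)) := by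
    rw [← Real.mul_rpow (by norm_num) pi_pos.le, neg_div]
  have e3 : (1/2:ℝ) ^ (-((d:ℝ)+1)/2) = 2 ^ ((d:ℝ)/2) * √2 := by
    rw [one_div, Real.inv_rpow (by norm_num), ← Real.rpow_neg (by norm_num), Real.sqrt_eq_rpow,
      ← Real.rpow_add (by norm_num)]
    congr 1; ring
  simp only [Fintype.card_fin, ENNReal.ofReal_one, one_pow, one_mul, nsmul_eq_mul, smul_eq_mul]
  rw [ENNReal.toReal_ofReal (by rw [e1]; positivity), e1, hq, e2, e3,
    show ((d:ℝ)+1)/2 = d/2+1/2 by ring, Real.rpow_neg (by norm_num), Real.rpow_neg pi_pos.le]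
  have : 0 < (2:ℝ) ^ ((d:ℝ)/2) := by positivity
  have : 0 < π ^ ((d:ℝ)/2) := by positivity
  field_simp

lemma gauss_nonneg (d : ℕ) (z : EucSp d) : 0 ≤ gauss d z := by
  unfold gauss; positivity

lemma gauss_cont (d : ℕ) : Continuous (gauss d) := by
  unfold gauss; fun_prop

lemma integrable_aux (d : ℕ) (hd : 0 < d) (k : ℕ) :
    Integrable (fun z : EucSp d => ‖z‖ ^ k * gauss d z) := by
  have : Nonempty (Fin d) := ⟨⟨0, hd⟩⟩
  refine (integrable_fun_norm_addHaar (volume : Measure (EucSp d))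
    (f := fun r : ℝ => r ^ k * ((2 * π) ^ (-(d:ℝ)/2) * Real.exp (-r^2/2)))).2 ?_
  have h := (integrableOn_rpow_mul_exp_neg_mul_sq (b := 1/2) (by norm_num)
    (s := ((d - 1 + k : ℕ) : ℝ)) (lt_of_lt_of_le (by norm_num) (Nat.cast_nonneg _))).const_mul
      ((2 * π) ^ (-(d:ℝ)/2))
  refine h.congr (Eventually.of_forall fun y => ?_)
  simp only [finrank_euclideanSpace, Fintype.card_fin, smul_eq_mul, Real.rpow_natCast]
  rw [show -y^2/2 = -(1/2) * y^2 by ring, pow_add]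
  ring

lemma integrable_max (d : ℕ) (hd : 0 < d) (a : ℝ) (ha : 0 ≤ a) (y : EucSp d) :
    Integrable (fun z : EucSp d => max a ‖y - z‖ * gauss d z) := by
  have h0 := (integrable_aux d hd 0).const_mul (a + ‖y‖)
  have h1 := integrable_aux d hd 1
  refine (h0.add h1).mono' ?_ (Eventually.of_forall fun z => ?_)
  · have := gauss_cont d
    exact Continuous.aestronglyMeasurable (by fun_prop)
  · have hg := gauss_nonneg d z
    have : max a ‖y - z‖ ≤ a + ‖y‖ + ‖z‖ := by
      have := norm_sub_le y z
      have := norm_nonneg y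
      have := norm_nonneg z
      apply max_le <;> linarith
    rw [Real.norm_of_nonneg (by positivity)]
    simp only [Pi.add_apply, pow_zero, pow_one, one_mul]
    nlinarith [mul_le_mul_of_nonneg_right this hg]

lemma sym_aux (d : ℕ) (hd : 0 < d) (a : ℝ) (ha : 0 ≤ a) (y : EucSp d) :
    ∫ z : EucSp d, max (max a ‖y‖) ‖0 - z‖ * gauss d z ≤
      ∫ z : EucSp d, max a ‖y - z‖ * gauss d z := by
  have hneg : ∫ z : EucSp d, max a ‖y - z‖ * gauss d z
      = ∫ z : EucSp d, max a ‖-y - z‖ * gauss d z := by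
    rw [← integral_neg_eq_self]
    congr 1; ext z
    rw [show y - -z = -(-y - z) by abel, norm_neg]
    simp [gauss]
  have h1 := integrable_max d hd a ha y
  have h2 := integrable_max d hd a ha (-y)
  have h3 := integrable_max d hd (max a ‖y‖) (le_max_of_le_left ha) 0
  have : 2 * ∫ z : EucSp d, max (max a ‖y‖) ‖0 - z‖ * gauss d z ≤
      (∫ z : EucSp d, max a ‖y - z‖ * gauss d z) + ∫ z : EucSp d, max a ‖-y - z‖ * gauss d z := by
    rw [← integral_add h1 h2, ← integral_const_mul]
    refine integral_mono (h3.const_mul 2) (h1.add h2) fun z => ?_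
    have hg := gauss_nonneg d z
    have n1 : 2 * ‖y‖ ≤ ‖y - z‖ + ‖-y - z‖ := by
      have := norm_sub_le (y - z) (-y - z)
      rwa [show y - z - (-y - z) = (2:ℝ) • y by rw [two_smul]; abel, norm_smul,
        Real.norm_of_nonneg (by norm_num)] at this
    have n2 : 2 * ‖0 - z‖ ≤ ‖y - z‖ + ‖-y - z‖ := by
      have := norm_add_le (y - z) (-y - z)
      rwa [show y - z + (-y - z) = (2:ℝ) • (0 - z) by rw [two_smul]; abel, norm_smul,
        Real.norm_of_nonneg (by norm_num)] at this
    have l1 := le_max_left a ‖y - z‖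
    have l2 := le_max_right a ‖y - z‖
    have l3 := le_max_left a ‖-y - z‖
    have l4 := le_max_right a ‖-y - z‖
    have : 2 * max (max a ‖y‖) ‖0 - z‖ ≤ max a ‖y - z‖ + max a ‖-y - z‖ := by
      have : max (max a ‖y‖) ‖0 - z‖ ≤ (max a ‖y - z‖ + max a ‖-y - z‖) / 2 :=
        max_le (max_le (by linarith) (by linarith)) (by linarith)
      linarith
    simp only [Pi.add_apply]
    nlinarith [mul_le_mul_of_nonneg_right this hg]
  rw [← hneg] at this
  linarith

lemma low_aux (d : ℕ) (hd : 0 < d) : ∃ c > 0, ∀ m : ℝ, 0 ≤ m →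
    c * min (m ^ (d+1)) m ≤ (∫ z : EucSp d, max m ‖0 - z‖ * gauss d z) - Cz d := by
  have : Nonempty (Fin d) := ⟨⟨0, hd⟩⟩
  set K : ℝ := (2 * π) ^ (-(d:ℝ)/2) * Real.exp (-(1/8)) with hK
  have hKp : 0 < K := by positivity
  set V : ℝ := (volume (Metric.ball (0 : EucSp d) 1)).toReal with hV
  have hVp : 0 < V := ENNReal.toReal_pos (Metric.measure_ball_pos _ _ one_pos).ne'
    measure_ball_lt_top.ne
  refine ⟨K * V * (1/2) ^ (d+1), by positivity, fun m hm => ?_⟩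
  set s := min m 1 with hs
  have hs0 : 0 ≤ s := le_min hm zero_le_one
  have hms : min (m ^ (d+1)) m = m * s ^ d := by
    rcases le_total m 1 with h | h
    · rw [hs, min_eq_left h, min_eq_left, pow_succ']
      exact pow_le_of_le_one hm h (by omega)
    · rw [hs, min_eq_right h, min_eq_right, one_pow, mul_one]
      exact le_self_pow₀ h (by omega)
  have hvol : (volume (Metric.ball (0 : EucSp d) (s/2))).toReal = (s/2)^d * V := by
    rw [Measure.addHaar_ball _ _ (by positivity), ENNReal.toReal_mul,
      ENNReal.toReal_ofReal (by positivity), finrank_euclideanSpace, Fintype.card_fin]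
  have h1 : Integrable (fun z : EucSp d => ‖z‖ * gauss d z) := by
    simpa using integrable_aux d hd 1
  have h2 : Integrable ((Metric.ball (0 : EucSp d) (s/2)).indicator (fun _ => m/2 * K)) :=
    (integrable_indicator_iff measurableSet_ball).2
      (integrableOn_const measure_ball_lt_top.ne)
  have h3 := integrable_max d hd m hm 0
  have key : (∫ z : EucSp d, (‖z‖ * gauss d z +
      (Metric.ball (0 : EucSp d) (s/2)).indicator (fun _ => m/2 * K) z)) ≤
      ∫ z : EucSp d, max m ‖0 - z‖ * gauss d z := by
    refine integral_mono (h1.add h2) h3 fun z => ?_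
    have hg := gauss_nonneg d z
    simp only [zero_sub, norm_neg]
    by_cases hz : z ∈ Metric.ball (0 : EucSp d) (s/2)
    · rw [indicator_of_mem hz]
      rw [mem_ball_zero_iff] at hz
      have z0 := norm_nonneg z
      have s1 : s ≤ 1 := min_le_right _ _
      have sm : s ≤ m := min_le_left _ _
      have gK : K ≤ gauss d z := by
        rw [hK, gauss]
        gcongr
        nlinarith
      have := le_max_left m ‖z‖
      have := mul_le_mul_of_nonneg_right (show ‖z‖ + m/2 ≤ max m ‖z‖ by linarith) hg
      have := mul_le_mul_of_nonneg_left gK (show 0 ≤ m/2 by linarith)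
      linarith
    · rw [indicator_of_notMem hz, add_zero]
      gcongr
      exact le_max_right _ _
  rw [integral_add h1 h2, integral_indicator measurableSet_ball, setIntegral_const,
    measureReal_def, hvol, smul_eq_mul] at key
  have : Cz d = ∫ z : EucSp d, ‖z‖ * gauss d z := rfl
  rw [hms, this]
  refine le_trans (le_of_eq ?_) (le_sub_iff_add_le'.2 key)
  rw [show s / 2 = 1/2 * s by ring, mul_pow, pow_succ]
  ring

/-- For every `d ≥ 1` there is `α_d > 0` with
`∫ max(a,|y−z|) ζ(z) dz − ∫ |z| ζ(z) dz ≥ α_d min(a^{d+1},a) + α_d min(|y|^{d+1},|y|)`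
for all `a ∈ [0, 2C_ζ]` and `y ∈ ℝ^d`, where
`C_ζ = ∫ |z| ζ(z) dz = √2 Γ(d/2+1/2)/Γ(d/2)`. -/
theorem gauss_max_lower_bound (d : ℕ) (hd : 0 < d) :
    Cz d = Real.sqrt 2 * (Real.Gamma ((d:ℝ)/2 + 1/2) / Real.Gamma ((d:ℝ)/2)) ∧
    ∃ α > 0, ∀ a ∈ Set.Icc (0:ℝ) (2 * Cz d), ∀ y : EucSp d,
      α * min (a ^ (d + 1)) a + α * min (‖y‖ ^ (d + 1)) ‖y‖ ≤
        (∫ z : EucSp d, max a ‖y - z‖ * gauss d z) - Cz d := by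
  refine ⟨Cz_aux d hd, ?_⟩
  obtain ⟨c, hc, h⟩ := low_aux d hd
  refine ⟨c/2, by positivity, fun a ha y => ?_⟩
  have ha0 := ha.1
  have h1 := sym_aux d hd a ha0 y
  have h2 := h (max a ‖y‖) (le_max_of_le_left ha0)
  have m1 : min (a ^ (d+1)) a ≤ min ((max a ‖y‖) ^ (d+1)) (max a ‖y‖) :=
    min_le_min (pow_le_pow_left₀ ha0 (le_max_left _ _) _) (le_max_left _ _)
  have m2 : min (‖y‖ ^ (d+1)) ‖y‖ ≤ min ((max a ‖y‖) ^ (d+1)) (max a ‖y‖) :=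
    min_le_min (pow_le_pow_left₀ (norm_nonneg y) (le_max_right _ _) _) (le_max_right _ _)
  have := mul_le_mul_of_nonneg_left m1 hc.le
  have := mul_le_mul_of_nonneg_left m2 hc.le
  linarith

end
end

section
/- Define F_d:[0,∞)→ℝ by F_d(a) := ∫_{ℝ^d} max(a, |z|) ζ(z) dz − ∫_{ℝ^d} |z| ζ(z) dz. Then F_d is infinitely differentiable on [0,∞) (one-sided at 0), with F_d'(a) = ∫_{|z| ≤ a} ζ(z) dz and F_d''(a) = (2^{1−d/2}/Γ(d/2))·a^{d−1}·e^{−a²/2} for all a ≥ 0; moreover F_d'(0) = F_d''(0) = ⋯ = F_d^{(d)}(0) = 0 and F_d^{(d+1)}(0) > 0. -/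
open MeasureTheory Filter Set Real Topology
open scoped NNReal ENNReal

noncomputable section

def Kd (d : ℕ) : ℝ := (2:ℝ) ^ (1 - (d:ℝ)/2) / Real.Gamma ((d:ℝ)/2)

def hd0 (d : ℕ) (y : ℝ) : ℝ := Kd d * y ^ (d - 1) * Real.exp (-y^2/2)

def Gd0 (d : ℕ) (a : ℝ) : ℝ := ∫ y in (0:ℝ)..a, hd0 d y

def Fd0 (d : ℕ) (a : ℝ) : ℝ := a * Gd0 d a - ∫ y in (0:ℝ)..a, y * hd0 d y

lemma Kd_pos (d : ℕ) (hd : 0 < d) : 0 < Kd d := by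
  unfold Kd
  have : 0 < Real.Gamma ((d:ℝ)/2) := Real.Gamma_pos_of_pos (by positivity)
  positivity

lemma Kd_eq (d : ℕ) (hd : 0 < d) :
    (d:ℝ) * (√π ^ d / Real.Gamma ((d:ℝ)/2 + 1)) * (2 * π) ^ (-(d:ℝ)/2) = Kd d := by
  unfold Kd
  have hd' : (0:ℝ) < d := by exact_mod_cast hd
  have hG : 0 < Real.Gamma ((d:ℝ)/2) := Real.Gamma_pos_of_pos (by positivity)
  have hpi := Real.pi_pos
  rw [Real.Gamma_add_one (by positivity)]
  have h1 : √π ^ d = π ^ ((d:ℝ)/2) := by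
    rw [Real.sqrt_eq_rpow, ← Real.rpow_natCast, ← Real.rpow_mul hpi.le]
    congr 1; ring
  have h2 : (2 * π) ^ (-(d:ℝ)/2) = ((2:ℝ) ^ ((d:ℝ)/2))⁻¹ * (π ^ ((d:ℝ)/2))⁻¹ := by
    rw [Real.mul_rpow (by norm_num) hpi.le, neg_div, Real.rpow_neg (by norm_num),
      Real.rpow_neg hpi.le]
  rw [h1, h2, Real.rpow_sub (by norm_num), Real.rpow_one]
  have h3 : 0 < π ^ ((d:ℝ)/2) := by positivity
  have h4 : 0 < (2:ℝ) ^ ((d:ℝ)/2) := by positivity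
  field_simp

lemma ball_real (d : ℕ) (hd : 0 < d) :
    (volume : Measure (EucSp d)).real (Metric.ball 0 1) = √π ^ d / Real.Gamma ((d:ℝ)/2 + 1) := by
  have : Nonempty (Fin d) := ⟨⟨0, hd⟩⟩
  have hG : 0 < Real.Gamma ((d:ℝ)/2 + 1) := Real.Gamma_pos_of_pos (by positivity)
  rw [measureReal_def, EuclideanSpace.volume_ball]
  simp only [ENNReal.ofReal_one, one_pow, one_mul, Fintype.card_fin]
  exact ENNReal.toReal_ofReal (by positivity)

lemma radial (d : ℕ) (hd : 0 < d) (f : ℝ → ℝ) :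
    ∫ z : EucSp d, f ‖z‖ * gauss d z = ∫ y in Ioi (0:ℝ), f y * hd0 d y := by
  have : Nonempty (Fin d) := ⟨⟨0, hd⟩⟩
  have h := integral_fun_norm_addHaar (volume : Measure (EucSp d))
    (fun r => f r * ((2 * π) ^ (-(d:ℝ)/2) * Real.exp (-r^2/2)))
  simp only [gauss]
  rw [h, ball_real d hd, finrank_euclideanSpace_fin, nsmul_eq_mul, smul_eq_mul, ← mul_assoc,
    ← integral_const_mul]
  congr 1
  ext y
  simp only [hd0, ← Kd_eq d hd, smul_eq_mul]
  ring

lemma radial_int (d : ℕ) (hd : 0 < d) (f : ℝ → ℝ)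
    (hf : IntegrableOn (fun y => f y * hd0 d y) (Ioi 0)) :
    Integrable (fun z : EucSp d => f ‖z‖ * gauss d z) := by
  have : Nonempty (Fin d) := ⟨⟨0, hd⟩⟩
  have h := (integrable_fun_norm_addHaar (volume : Measure (EucSp d))
    (f := fun r => f r * ((2 * π) ^ (-(d:ℝ)/2) * Real.exp (-r^2/2)))).2
  apply h
  rw [finrank_euclideanSpace_fin]
  have hK := (Kd_pos d hd).ne'
  refine (hf.const_mul ((2 * π) ^ (-(d:ℝ)/2) / Kd d)).congr (Eventually.of_forall fun y => ?_)
  simp only [hd0, smul_eq_mul]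
  field_simp

lemma hd0_contDiff (d : ℕ) : ContDiff ℝ (⊤ : ℕ∞) (hd0 d) := by
  unfold hd0; fun_prop

lemma hd0_cont (d : ℕ) : Continuous (hd0 d) := (hd0_contDiff d).continuous

lemma pow_int (n : ℕ) : IntegrableOn (fun y : ℝ => y ^ n * Real.exp (-y^2/2)) (Ioi 0) := by
  have := integrableOn_rpow_mul_exp_neg_mul_sq (b := 1/2) (by norm_num) (s := (n:ℝ))
    (by have : (0:ℝ) ≤ n := n.cast_nonneg
        linarith)
  refine this.congr (Eventually.of_forall fun y => ?_)
  simp only [Real.rpow_natCast]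
  congr 2; ring

lemma hd0_int (d : ℕ) : IntegrableOn (hd0 d) (Ioi 0) := by
  refine ((pow_int (d-1)).const_mul (Kd d)).congr (Eventually.of_forall fun y => ?_)
  simp only [hd0]; ring

lemma id_hd0_int (d : ℕ) : IntegrableOn (fun y => y * hd0 d y) (Ioi 0) := by
  refine ((pow_int (d-1+1)).const_mul (Kd d)).congr (Eventually.of_forall fun y => ?_)
  simp only [hd0]; ring

lemma max_eq' (a y : ℝ) : max a y = y + (Iic a).indicator (fun y => a - y) y := by
  by_cases h : y ≤ a
  · simp [h]
  · simp [h, (not_le.1 h).le]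

lemma trunc_int (d : ℕ) (a : ℝ) (ha : 0 ≤ a) (g : ℝ → ℝ) :
    ∫ y in Ioi (0:ℝ), (Iic a).indicator g y * hd0 d y = ∫ y in (0:ℝ)..a, g y * hd0 d y := by
  rw [intervalIntegral.integral_of_le ha, ← Ioi_inter_Iic, inter_comm,
    ← Measure.restrict_restrict measurableSet_Iic, ← integral_indicator measurableSet_Iic]
  congr 1
  ext y
  by_cases h : y ∈ Iic a <;> simp [h]

lemma trunc_integrable (d : ℕ) (a : ℝ) (g : ℝ → ℝ) (hg : Continuous g) :
    IntegrableOn (fun y => (Iic a).indicator g y * hd0 d y) (Ioi 0) := by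
  have : (fun y => (Iic a).indicator g y * hd0 d y)
      = (Iic a).indicator (fun y => g y * hd0 d y) := by
    ext y
    by_cases h : y ∈ Iic a <;> simp [h]
  rw [this, IntegrableOn, integrable_indicator_iff measurableSet_Iic, IntegrableOn,
    Measure.restrict_restrict measurableSet_Iic, inter_comm, Ioi_inter_Iic]
  exact ((hg.mul (hd0_cont d)).integrableOn_Icc).mono_set Ioc_subset_Icc_self

lemma F_eq (d : ℕ) (hd : 0 < d) (a : ℝ) (ha : 0 ≤ a) :
    (∫ z : EucSp d, max a ‖z‖ * gauss d z) - Cz d = Fd0 d a := by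
  have h1 := radial d hd (fun y => max a y)
  have h2 := radial d hd (fun y => y)
  rw [Cz, h1, h2]
  have hi := trunc_integrable d a (fun y => a - y) (by fun_prop)
  have h3 : ∫ y in Ioi (0:ℝ), max a y * hd0 d y = (∫ y in Ioi (0:ℝ), y * hd0 d y)
      + ∫ y in Ioi (0:ℝ), (Iic a).indicator (fun y => a - y) y * hd0 d y := by
    rw [← integral_add (id_hd0_int d) hi]
    congr 1
    ext y
    rw [max_eq', add_mul]
  rw [h3, trunc_int d a ha, Fd0, Gd0, ← intervalIntegral.integral_const_mul,
    ← intervalIntegral.integral_sub]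
  · rw [add_sub_cancel_left]
    congr 1
    ext y; ring
  · exact (continuous_const.mul (hd0_cont d)).intervalIntegrable _ _
  · exact (continuous_id.mul (hd0_cont d)).intervalIntegrable _ _

lemma G_eq (d : ℕ) (hd : 0 < d) (a : ℝ) (ha : 0 ≤ a) :
    (∫ z in {z : EucSp d | ‖z‖ ≤ a}, gauss d z) = Gd0 d a := by
  have h1 := radial d hd ((Iic a).indicator (fun _ => 1))
  rw [trunc_int d a ha] at h1
  simp only [one_mul] at h1
  rw [Gd0, ← h1, ← integral_indicator (measurableSet_le (by fun_prop) (by fun_prop))]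
  congr 1
  ext z
  by_cases h : ‖z‖ ≤ a <;> simp [h]

lemma G_deriv (d : ℕ) (a : ℝ) : HasDerivAt (Gd0 d) (hd0 d a) a :=
  (hd0_cont d).integral_hasStrictDerivAt 0 a |>.hasDerivAt

lemma F_deriv (d : ℕ) (a : ℝ) : HasDerivAt (Fd0 d) (Gd0 d a) a := by
  have h1 := ((continuous_id.mul (hd0_cont d)).integral_hasStrictDerivAt 0 a).hasDerivAt
  have h2 := ((hasDerivAt_id a).mul (G_deriv d a)).sub h1
  refine h2.congr_deriv ?_
  simp

lemma G_contDiff (d : ℕ) : ContDiff ℝ (⊤ : ℕ∞) (Gd0 d) := by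
  rw [contDiff_infty_iff_deriv]
  refine ⟨fun a => (G_deriv d a).differentiableAt, ?_⟩
  rw [show deriv (Gd0 d) = hd0 d from funext fun a => (G_deriv d a).deriv]
  exact hd0_contDiff d

lemma F_contDiff (d : ℕ) : ContDiff ℝ (⊤ : ℕ∞) (Fd0 d) := by
  rw [contDiff_infty_iff_deriv]
  refine ⟨fun a => (F_deriv d a).differentiableAt, ?_⟩
  rw [show deriv (Fd0 d) = Gd0 d from funext fun a => (F_deriv d a).deriv]
  exact G_contDiff d

lemma iter_pow (n : ℕ) : ∀ (k : ℕ) (φ : ℝ → ℝ), ContDiff ℝ (⊤ : ℕ∞) φ →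
    (k < n → iteratedDeriv k (fun y => y ^ n * φ y) 0 = 0) ∧
    (k = n → iteratedDeriv k (fun y => y ^ n * φ y) 0 = n.factorial * φ 0) := by
  induction n with
  | zero =>
    intro k φ _
    refine ⟨fun h => by omega, ?_⟩
    rintro rfl
    simp
  | succ n ih =>
    intro k φ hφ
    rcases k with _ | k
    · refine ⟨fun _ => by simp, fun h => by omega⟩
    have hφ2 := (contDiff_infty_iff_deriv.1 hφ)
    have hd : deriv (fun y => y ^ (n+1) * φ y)
        = fun y => y ^ n * (((n:ℝ) + 1) * φ y + y * deriv φ y) := by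
      ext y
      have := ((hasDerivAt_pow (n+1) y).mul (hφ2.1 y).hasDerivAt).deriv
      refine this.trans ?_
      push_cast
      ring
    have hψ : ContDiff ℝ (⊤ : ℕ∞) (fun y => ((n:ℝ) + 1) * φ y + y * deriv φ y) :=
      (contDiff_const.mul hφ).add (contDiff_id.mul hφ2.2)
    rw [iteratedDeriv_succ', hd]
    obtain ⟨h1, h2⟩ := ih k _ hψ
    refine ⟨fun h => h1 (by omega), fun h => ?_⟩
    rw [h2 (by omega), Nat.factorial_succ]
    push_cast
    ring

lemma hd0_iter (d k : ℕ) :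
    (k < d - 1 → iteratedDeriv k (hd0 d) 0 = 0) ∧
    (k = d - 1 → iteratedDeriv k (hd0 d) 0 = (d-1).factorial * Kd d) := by
  have h := iter_pow (d-1) k (fun y => Kd d * Real.exp (-y^2/2)) (by fun_prop)
  have e : hd0 d = fun y => y ^ (d-1) * (Kd d * Real.exp (-y^2/2)) := by
    ext y; simp only [hd0]; ring
  rw [e]
  simpa using h

lemma F_iter (d k : ℕ) : iteratedDeriv (k+2) (Fd0 d) = iteratedDeriv k (hd0 d) := by
  rw [iteratedDeriv_succ', iteratedDeriv_succ',
    show deriv (Fd0 d) = Gd0 d from funext fun a => (F_deriv d a).deriv,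
    show deriv (Gd0 d) = hd0 d from funext fun a => (G_deriv d a).deriv]

/-- The function `F_d(a) := ∫ max(a,|z|) ζ(z) dz − ∫ |z| ζ(z) dz` is
infinitely differentiable on `[0,∞)` (one-sided at `0`), with
`F_d'(a) = ∫_{|z|≤a} ζ(z) dz` and `F_d''(a) = (2^{1−d/2}/Γ(d/2)) a^{d−1} e^{−a²/2}`;
moreover `F_d'(0) = ⋯ = F_d^{(d)}(0) = 0` and `F_d^{(d+1)}(0) > 0`. -/
theorem Fd_derivatives (d : ℕ) (hd : 0 < d) :
    ContDiffOn ℝ (⊤ : ℕ∞) (fun a : ℝ => (∫ z : EucSp d, max a ‖z‖ * gauss d z) - Cz d)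
      (Set.Ici 0) ∧
    (∀ a : ℝ, 0 ≤ a →
      HasDerivWithinAt (fun a : ℝ => (∫ z : EucSp d, max a ‖z‖ * gauss d z) - Cz d)
        (∫ z in {z : EucSp d | ‖z‖ ≤ a}, gauss d z) (Set.Ici 0) a) ∧
    (∀ a : ℝ, 0 ≤ a →
      HasDerivWithinAt (fun a : ℝ => ∫ z in {z : EucSp d | ‖z‖ ≤ a}, gauss d z)
        ((2:ℝ) ^ (1 - (d:ℝ)/2) / Real.Gamma ((d:ℝ)/2) * a ^ (d - 1) *
          Real.exp (-a^2/2)) (Set.Ici 0) a) ∧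
    (∀ k : ℕ, 1 ≤ k → k ≤ d →
      iteratedDerivWithin k (fun a : ℝ => (∫ z : EucSp d, max a ‖z‖ * gauss d z) - Cz d)
        (Set.Ici 0) 0 = 0) ∧
    0 < iteratedDerivWithin (d + 1)
        (fun a : ℝ => (∫ z : EucSp d, max a ‖z‖ * gauss d z) - Cz d) (Set.Ici 0) 0 := by
  have hEq : Set.EqOn (fun a : ℝ => (∫ z : EucSp d, max a ‖z‖ * gauss d z) - Cz d) (Fd0 d)
      (Set.Ici 0) := fun a ha => F_eq d hd a ha
  have hGEq : Set.EqOn (fun a : ℝ => ∫ z in {z : EucSp d | ‖z‖ ≤ a}, gauss d z) (Gd0 d)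
      (Set.Ici 0) := fun a ha => G_eq d hd a ha
  have h0 : (0:ℝ) ∈ Set.Ici (0:ℝ) := Set.self_mem_Ici
  have hit : ∀ k : ℕ, iteratedDerivWithin k
      (fun a : ℝ => (∫ z : EucSp d, max a ‖z‖ * gauss d z) - Cz d) (Set.Ici 0) 0
      = iteratedDeriv k (Fd0 d) 0 := by
    intro k
    rw [iteratedDerivWithin_congr hEq h0]
    exact iteratedDerivWithin_eq_iteratedDeriv (uniqueDiffOn_Ici 0)
      (((F_contDiff d).of_le (by exact_mod_cast le_top)).contDiffAt) h0
  refine ⟨(F_contDiff d).contDiffOn.congr hEq, ?_, ?_, ?_, ?_⟩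
  · intro a ha
    rw [G_eq d hd a ha]
    exact (F_deriv d a).hasDerivWithinAt.congr hEq (hEq ha)
  · intro a ha
    exact (G_deriv d a).hasDerivWithinAt.congr hGEq (hGEq ha)
  · intro k hk1 hkd
    rw [hit]
    obtain _ | _ | k := k
    · omega
    · rw [zero_add, iteratedDeriv_one, (F_deriv d 0).deriv]
      simp [Gd0]
    · rw [F_iter]
      exact (hd0_iter d k).1 (by omega)
  · rw [hit]
    obtain ⟨e, rfl⟩ : ∃ e, d = e + 1 := ⟨d - 1, by omega⟩
    rw [F_iter, (hd0_iter (e+1) e).2 (by omega)]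
    have := Kd_pos (e+1) hd
    positivity

end
end
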